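/- arXiv:2012.08162 — 3 statements merged into one kernel-verified Lean document; each statement's English description precedes it below -/
import Mathlib

section
/- Let X be a reflexive real Banach space, Y a real normed linear space, and let T, A : X → Y be compact linear operators with ‖T‖ = ‖A‖ = 1 such that at least one of A and T is injective. Let 𝒜 = {x ∈ S_X : Tx ≠ λ·Ax for all real λ}. If A ⊥_B T (in the operator norm), then 𝒜 is nonempty and, with α = sup_{x ∈ 𝒜} inf_{λ ∈ ℝ} ‖Tx + λ·Ax‖, one has 0 < α ≤ 1 and ‖T + λ·A‖ ≥ α for every real λ (i.e., T ⊥_D^ε A where √(1−ε²) = α). -/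
/-!
If every `T x` is a multiple of `A x`, then `T` is a multiple of `A`: it suffices to compare the
coefficients at vectors whose images under `A` are linearly independent, and `ker A ≤ ker T` covers
the others. So as soon as `T` is not a multiple of `A`, some unit vector `x` has `T x` outside the
line through `A x`, at a positive distance because this line is closed. On the other hand, that
distance is at most `‖T x + t • A x‖ ≤ ‖T + t • A‖` for every `t`. Finally, `T = l • A ≠ 0` is
incompatible with `A ⊥_B T`, because `A - l⁻¹ • T = 0`.
-/

open Set Metric

section Defs

variable {E : Type*} [NormedAddCommGroup E] [NormedSpace ℝ E]

/-- Birkhoff-James orthogonality: `x ⊥_B y` iff `‖x + t • y‖ ≥ ‖x‖` for all real `t`. -/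
def BJOrth (x y : E) : Prop := ∀ t : ℝ, ‖x‖ ≤ ‖x + t • y‖

/-- Dragomir-type approximate orthogonality: `x ⊥_D^ε y` iff
`‖x + t • y‖ ≥ √(1 - ε²) ‖x‖` for all real `t`. -/
def DOrth (ε : ℝ) (x y : E) : Prop :=
  ∀ t : ℝ, Real.sqrt (1 - ε ^ 2) * ‖x‖ ≤ ‖x + t • y‖

/-- Chmieliński-type approximate orthogonality: `x ⊥_B^ε y` iff
`‖x + t • y‖² ≥ ‖x‖² - 2 ε ‖x‖ ‖t • y‖` for all real `t`. -/
def BOrth (ε : ℝ) (x y : E) : Prop :=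
  ∀ t : ℝ, ‖x‖ ^ 2 - 2 * ε * ‖x‖ * ‖t • y‖ ≤ ‖x + t • y‖ ^ 2

/-- The set of supporting functionals at `x`. -/
def SuppJ (x : E) : Set (E →L[ℝ] ℝ) := {f | ‖f‖ = 1 ∧ f x = ‖x‖}

/-- The local property (P) at `x`: there is no unit vector `y` with `x ⊥_B y` such that
every supporting functional of `y` (or its negative) supports `x`. -/
def LocalP (x : E) : Prop :=
  ¬ ∃ y : E, ‖y‖ = 1 ∧ BJOrth x y ∧ ∀ f ∈ SuppJ y, f ∈ SuppJ x ∨ -f ∈ SuppJ x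

end Defs

theorem BJOrth.ne_smul {E : Type*} [NormedAddCommGroup E] [NormedSpace ℝ E] {x y : E}
    (h : BJOrth x y) (hx : x ≠ 0) (hy : y ≠ 0) (l : ℝ) : y ≠ l • x := by
  rintro rfl
  have hl : l ≠ 0 := (smul_ne_zero_iff.mp hy).1
  have hle : ‖x‖ ≤ 0 := by simpa [smul_smul, hl] using h (-l⁻¹)
  exact hx (norm_le_zero_iff.mp hle)

theorem exists_eq_smul_of_forall_exists_apply_eq_smul {K V W : Type*} [Field K]
    [AddCommGroup V] [Module K V] [AddCommGroup W] [Module K W] {T A : V →ₗ[K] W}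
    (h : ∀ x, ∃ c : K, T x = c • A x) : ∃ a : K, T = a • A := by
  choose c hc using h
  have map_eq_zero {x : V} (hx : A x = 0) : T x = 0 := by rw [hc, hx, smul_zero]
  by_cases hA : ∃ x₀, A x₀ ≠ 0
  · obtain ⟨x₀, hx₀⟩ := hA
    refine ⟨c x₀, LinearMap.ext fun y => ?_⟩
    by_cases hind : LinearIndependent K ![A x₀, A y]
    · have hsum : c (x₀ + y) • A x₀ + c (x₀ + y) • A y = c x₀ • A x₀ + c y • A y := by
        rw [← smul_add, ← map_add, ← hc, map_add, hc x₀, hc y]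
      obtain ⟨hcx₀, hcy⟩ := hind.eq_of_pair hsum
      rw [LinearMap.smul_apply, hc y, ← hcx₀, hcy]
    · obtain ⟨m, hm⟩ : ∃ m : K, m • A x₀ = A y := by
        simpa [LinearIndependent.pair_iff' hx₀] using hind
      have hker : T (y - m • x₀) = 0 :=
        map_eq_zero (by rw [map_sub, map_smul, hm, sub_self])
      calc T y = m • T x₀ := by rwa [map_sub, map_smul, sub_eq_zero] at hker
        _ = c x₀ • A y := by rw [hc x₀, smul_comm, hm]
  · push Not at hA
    exact ⟨0, LinearMap.ext fun x => by rw [zero_smul, map_eq_zero (hA x), LinearMap.zero_apply]⟩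

theorem infDist_span_singleton {R E : Type*} [Ring R] [SeminormedAddCommGroup E] [Module R E]
    (u v : E) : infDist u (Submodule.span R {v} : Set E) = ⨅ t : R, ‖u + t • v‖ := by
  have hsurj : Function.Surjective fun t : R =>
      (⟨-t • v, Submodule.mem_span_singleton.mpr ⟨-t, rfl⟩⟩ : Submodule.span R {v}) := by
    rintro ⟨w, hw⟩
    obtain ⟨t, rfl⟩ := Submodule.mem_span_singleton.mp hw
    exact ⟨-t, by simp⟩
  calc infDist u (Submodule.span R {v} : Set E)
      = ⨅ w : Submodule.span R {v}, dist u w := infDist_eq_iInf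
    _ = ⨅ t : R, dist u (-t • v) := (hsurj.iInf_comp fun w => dist u (w : E)).symm
    _ = ⨅ t : R, ‖u + t • v‖ := by simp only [dist_eq_norm, neg_smul, sub_neg_eq_add]

theorem iInf_norm_add_smul_pos_iff {𝕜 E : Type*} [NontriviallyNormedField 𝕜] [CompleteSpace 𝕜]
    [NormedAddCommGroup E] [NormedSpace 𝕜 E] {u v : E} :
    0 < ⨅ t : 𝕜, ‖u + t • v‖ ↔ ∀ l : 𝕜, u ≠ l • v := by
  have hclosed : IsClosed (Submodule.span 𝕜 {v} : Set E) := Submodule.closed_of_finiteDimensional _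
  rw [← infDist_span_singleton, ← hclosed.notMem_iff_infDist_pos ⟨0, Submodule.zero_mem _⟩]
  simp only [SetLike.mem_coe, Submodule.mem_span_singleton, not_exists, ne_eq, eq_comm]

theorem iInf_norm_apply_add_smul_le_opNorm {𝕜 X Y : Type*} [NontriviallyNormedField 𝕜]
    [SeminormedAddCommGroup X] [NormedSpace 𝕜 X] [SeminormedAddCommGroup Y] [NormedSpace 𝕜 Y]
    (T A : X →L[𝕜] Y) {x : X} (hx : ‖x‖ ≤ 1) (t : 𝕜) :
    ⨅ s : 𝕜, ‖T x + s • A x‖ ≤ ‖T + t • A‖ :=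
  calc ⨅ s : 𝕜, ‖T x + s • A x‖
      ≤ ‖T x + t • A x‖ := ciInf_le ⟨0, forall_mem_range.mpr fun _ => norm_nonneg _⟩ t
    _ ≤ ‖T + t • A‖ := (T + t • A).unit_le_opNorm x hx

section RCLike

variable {𝕜 X Y : Type*} [RCLike 𝕜] [SeminormedAddCommGroup X] [NormedSpace 𝕜 X]
  [NormedAddCommGroup Y] [NormedSpace 𝕜 Y]

theorem exists_norm_eq_one_forall_apply_ne_smul {T A : X →L[𝕜] Y} (h : ∀ l : 𝕜, T ≠ l • A) :
    ∃ x : X, ‖x‖ = 1 ∧ ∀ l : 𝕜, T x ≠ l • A x := by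
  obtain ⟨x, hx⟩ : ∃ x, ∀ l : 𝕜, T x ≠ l • A x := by
    by_contra! hprop
    obtain ⟨a, ha⟩ := exists_eq_smul_of_forall_exists_apply_eq_smul
      (T := T.toLinearMap) (A := A.toLinearMap) hprop
    exact h a (ContinuousLinearMap.coe_injective ha)
  have hTx : T x ≠ 0 := by simpa using hx 0
  have hnorm : ‖x‖ ≠ 0 := fun h₀ =>
    hTx (norm_le_zero_iff.mp (by simpa [h₀] using T.le_opNorm x))
  have hinv : (‖x‖⁻¹ : 𝕜) ≠ 0 := inv_ne_zero (RCLike.ofReal_ne_zero.mpr hnorm)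
  refine ⟨(‖x‖⁻¹ : 𝕜) • x, by simp [norm_smul, hnorm], fun l hl => hx l ?_⟩
  rw [map_smul, map_smul, smul_comm l] at hl
  exact smul_right_injective Y hinv hl

theorem stmt_5_general (T A : X →L[𝕜] Y) (h : ∀ l : 𝕜, T ≠ l • A)
    (𝒜 : Set X) (h𝒜 : 𝒜 = {x : X | ‖x‖ = 1 ∧ ∀ l : 𝕜, T x ≠ l • A x})
    (α : ℝ) (hα : α = ⨆ x : 𝒜, ⨅ t : 𝕜, ‖T x + t • A x‖) :
    𝒜.Nonempty ∧ 0 < α ∧ α ≤ ‖T‖ ∧ ∀ t : 𝕜, α ≤ ‖T + t • A‖ := by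
  subst h𝒜 hα
  obtain ⟨x, hx⟩ := exists_norm_eq_one_forall_apply_ne_smul h
  set 𝒜 := {x : X | ‖x‖ = 1 ∧ ∀ l : 𝕜, T x ≠ l • A x}
  have : Nonempty 𝒜 := ⟨x, hx⟩
  have hbound (t : 𝕜) (y : 𝒜) : ⨅ s : 𝕜, ‖T y + s • A y‖ ≤ ‖T + t • A‖ :=
    iInf_norm_apply_add_smul_le_opNorm T A y.2.1.le t
  have hle (t : 𝕜) : ⨆ y : 𝒜, ⨅ s : 𝕜, ‖T y + s • A y‖ ≤ ‖T + t • A‖ := ciSup_le (hbound t)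
  have hpos : 0 < ⨆ y : 𝒜, ⨅ s : 𝕜, ‖T y + s • A y‖ :=
    (iInf_norm_add_smul_pos_iff.mpr hx.2).trans_le
      (le_ciSup (f := fun y : 𝒜 => ⨅ s : 𝕜, ‖T y + s • A y‖)
        ⟨_, forall_mem_range.mpr (hbound 0)⟩ ⟨x, hx⟩)
  exact ⟨⟨x, hx⟩, hpos, by simpa using hle 0, hle⟩

end RCLike

theorem stmt_5 {X Y : Type*} [NormedAddCommGroup X] [NormedSpace ℝ X] [CompleteSpace X]
    [NormedAddCommGroup Y] [NormedSpace ℝ Y]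
    (hrefl : Function.Surjective (NormedSpace.inclusionInDoubleDual ℝ X))
    (T A : X →L[ℝ] Y) (hTcpt : IsCompactOperator T) (hAcpt : IsCompactOperator A)
    (hT : ‖T‖ = 1) (hA : ‖A‖ = 1)
    (hinj : Function.Injective A ∨ Function.Injective T)
    (𝒜 : Set X) (h𝒜 : 𝒜 = {x : X | ‖x‖ = 1 ∧ ∀ l : ℝ, T x ≠ l • A x})
    (horth : BJOrth A T)
    (α : ℝ) (hα : α = ⨆ x : 𝒜, ⨅ t : ℝ, ‖T x + t • A x‖) :
    𝒜.Nonempty ∧ 0 < α ∧ α ≤ 1 ∧ ∀ t : ℝ, α ≤ ‖T + t • A‖ := by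
  have hA₀ : A ≠ 0 := norm_ne_zero_iff.mp (by simp [hA])
  have hT₀ : T ≠ 0 := norm_ne_zero_iff.mp (by simp [hT])
  simpa only [hT] using stmt_5_general T A (horth.ne_smul hA₀ hT₀) 𝒜 h𝒜 α hα
end

section
/- Let X be a real normed linear space and let x ∈ S_X. Then x has the local property (P) if and only if for every y ∈ S_X with x ⊥_B y there exists ε ∈ [0,1) such that y ⊥_B^ε x. -/
open Set Metric

/-!
Approximate orthogonality in `X` is exact orthogonality in the `ℓ¹`-sum `X ⊕₁ ℝ`: convexity of the
norm improves the quadratic inequality defining `x ⊥_B^ε y` to the linear one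
`‖x‖ ≤ ‖x + t y‖ + ε ‖t y‖`, which says that `(x, 0) ⊥_B (y, ε ‖y‖)`. James' theorem, i.e.
Hahn-Banach on the quotient by the line through `(y, ε ‖y‖)`, gives a functional supporting `(x, 0)`
and vanishing at `(y, ε ‖y‖)`; its restriction `f` to `X` supports `x` and has `|f y| ≤ ε ‖y‖`.
Hence `x ⊥_B^ε y` if and only if some `f ∈ J(x)` has `|f y| ≤ ε ‖y‖`.

On the other hand, `f` or `-f` supports `x` exactly when `|f x| = ‖x‖`, so property (P) at `x` says
that every unit `y` with `x ⊥_B y` admits `f ∈ J(y)` with `|f x| < ‖x‖`.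
-/

section SeminormedSpace

variable {E : Type*} [SeminormedAddCommGroup E] [NormedSpace ℝ E]

theorem abs_apply_le_norm_of_norm_le_one {f : E →L[ℝ] ℝ} (hf : ‖f‖ ≤ 1) (x : E) :
    |f x| ≤ ‖x‖ := by
  simpa using f.le_of_opNorm_le hf x

theorem norm_add_smul_le_of_mem_Icc {s : ℝ} (hs : s ∈ Icc (0 : ℝ) 1) (x z : E) :
    ‖x + s • z‖ ≤ ‖x‖ + s * (‖x + z‖ - ‖x‖) := by
  have hconv := convexOn_univ_norm.2 (mem_univ x) (mem_univ (x + z)) (sub_nonneg.2 hs.2) hs.1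
    (sub_add_cancel 1 s)
  have hpoint : (1 - s) • x + s • (x + z) = x + s • z := by module
  rw [hpoint, smul_eq_mul, smul_eq_mul] at hconv
  linarith

end SeminormedSpace

section SupportingFunctionals

variable {E : Type*} [NormedAddCommGroup E] [NormedSpace ℝ E] {x y : E} {f : E →L[ℝ] ℝ}

theorem mem_suppJ_of_norm_le_one (hx : x ≠ 0) (hf : ‖f‖ ≤ 1) (hfx : f x = ‖x‖) : f ∈ SuppJ x := by
  refine ⟨hf.antisymm (le_of_mul_le_mul_right ?_ (norm_pos_iff.2 hx)), hfx⟩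
  calc 1 * ‖x‖ = ‖f x‖ := by rw [one_mul, hfx, norm_norm]
    _ ≤ ‖f‖ * ‖x‖ := f.le_opNorm x

theorem mem_suppJ_or_neg_mem_suppJ_iff (hf : ‖f‖ = 1) :
    f ∈ SuppJ x ∨ -f ∈ SuppJ x ↔ |f x| = ‖x‖ := by
  simp [SuppJ, hf, abs_eq (norm_nonneg x), neg_eq_iff_eq_neg]

theorem localP_iff_exists_mem_suppJ_abs_lt :
    LocalP x ↔ ∀ y : E, ‖y‖ = 1 → BJOrth x y → ∃ f ∈ SuppJ y, |f x| < ‖x‖ := by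
  simp only [LocalP, not_exists, not_and, not_forall]
  refine forall₃_congr fun y _ _ => exists_congr fun f => ?_
  rw [exists_prop]
  refine and_congr_right fun hf => ?_
  rw [mem_suppJ_or_neg_mem_suppJ_iff hf.1,
    (abs_apply_le_norm_of_norm_le_one hf.1.le x).lt_iff_ne]

theorem exists_mem_suppJ_forall_mem_eq_zero (hx : x ≠ 0) (S : Submodule ℝ E)
    (hS : ∀ z ∈ S, ‖x‖ ≤ ‖x + z‖) : ∃ f ∈ SuppJ x, ∀ z ∈ S, f z = 0 := by
  have norm_mkQL_le (z : E) : ‖S.mkQL z‖ ≤ 1 * ‖z‖ := by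
    simpa using Submodule.Quotient.norm_mk_le S z
  have norm_mkQL_x : ‖S.mkQL x‖ = ‖x‖ := by
    refine le_antisymm (by simpa using norm_mkQL_le x) (QuotientAddGroup.le_norm_iff.2 ?_)
    intro m hm
    have hmx : m - x ∈ S := (Submodule.Quotient.eq S).1 hm
    simpa using hS _ hmx
  obtain ⟨g, hg, hgx⟩ := exists_dual_vector'' ℝ (S.mkQL x)
  refine ⟨g ∘L S.mkQL, mem_suppJ_of_norm_le_one hx ?_ ?_, fun z hz => ?_⟩
  · calc ‖g ∘L S.mkQL‖ ≤ ‖g‖ * ‖S.mkQL‖ := g.opNorm_comp_le _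
      _ ≤ 1 * 1 := by
        gcongr
        exact S.mkQL.opNorm_le_bound zero_le_one norm_mkQL_le
      _ = 1 := one_mul 1
  · exact hgx.trans norm_mkQL_x
  · simp [(Submodule.Quotient.mk_eq_zero S).2 hz]

theorem BJOrth.exists_mem_suppJ_apply_eq_zero (hx : x ≠ 0) (h : BJOrth x y) :
    ∃ f ∈ SuppJ x, f y = 0 := by
  obtain ⟨f, hf, hfy⟩ := exists_mem_suppJ_forall_mem_eq_zero hx (ℝ ∙ y) fun z hz => by
    obtain ⟨t, rfl⟩ := Submodule.mem_span_singleton.1 hz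
    exact h t
  exact ⟨f, hf, hfy y (Submodule.mem_span_singleton_self y)⟩

end SupportingFunctionals

section ApproximateOrthogonality

variable {E : Type*} [NormedAddCommGroup E] [NormedSpace ℝ E] {ε : ℝ} {x y : E}

theorem BOrth.norm_le_norm_add_add (hx : x ≠ 0) (h : BOrth ε x y) (t : ℝ) :
    ‖x‖ ≤ ‖x + t • y‖ + ε * ‖t • y‖ := by
  set d := ‖x + t • y‖ - ‖x‖
  -- The defining inequality at `s t`, expanded along the segment and divided by `s`.
  have hscaled : ∀ s ∈ Ioc (0 : ℝ) 1, 0 ≤ 2 * ‖x‖ * (d + ε * ‖t • y‖) + s * d ^ 2 := by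
    intro s hs
    refine nonneg_of_mul_nonneg_right ?_ hs.1
    have hsq : ‖x + s • t • y‖ ^ 2 ≤ (‖x‖ + s * d) ^ 2 := by
      gcongr
      exact norm_add_smul_le_of_mem_Icc (Ioc_subset_Icc_self hs) x (t • y)
    have horth := h (s * t)
    rw [mul_smul, norm_smul s, Real.norm_of_nonneg hs.1.le] at horth
    linarith
  have hlimit : 0 ≤ 2 * ‖x‖ * (d + ε * ‖t • y‖) := by
    have hcont : Continuous fun s : ℝ => 2 * ‖x‖ * (d + ε * ‖t • y‖) + s * d ^ 2 := by fun_prop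
    have htendsto := (hcont.tendsto 0).mono_left (nhdsWithin_le_nhds (s := Ioi 0))
    simpa using ge_of_tendsto htendsto
      (Filter.eventually_of_mem (Ioc_mem_nhdsGT zero_lt_one) hscaled)
  have hpos : 0 < 2 * ‖x‖ := by positivity
  linarith [nonneg_of_mul_nonneg_right hlimit hpos]

theorem BOrth.bjOrth_toLp (hε : 0 ≤ ε) (hx : x ≠ 0) (h : BOrth ε x y) :
    BJOrth (WithLp.toLp 1 (x, (0 : ℝ))) (WithLp.toLp 1 (y, ε * ‖y‖)) := fun t => by
  have hle := h.norm_le_norm_add_add hx t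
  rw [norm_smul] at hle
  simpa [WithLp.prod_norm_eq_of_L1, abs_of_nonneg hε, mul_left_comm] using hle

theorem BOrth.exists_mem_suppJ_abs_le (hε : 0 ≤ ε) (hx : x ≠ 0) (h : BOrth ε x y) :
    ∃ f ∈ SuppJ x, |f y| ≤ ε * ‖y‖ := by
  have hx0 : WithLp.toLp 1 (x, (0 : ℝ)) ≠ 0 := by simpa using hx
  obtain ⟨F, ⟨hF, hFx⟩, hFy⟩ := (h.bjOrth_toLp hε hx).exists_mem_suppJ_apply_eq_zero hx0
  let f : E →L[ℝ] ℝ :=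
    F ∘L (WithLp.prodContinuousLinearEquiv 1 ℝ E ℝ).symm ∘L ContinuousLinearMap.inl ℝ E ℝ
  have hf (z : E) : f z = F (WithLp.toLp 1 (z, 0)) := rfl
  have hf_norm : ‖f‖ ≤ 1 := f.opNorm_le_bound zero_le_one fun z => by
    simpa [hf] using abs_apply_le_norm_of_norm_le_one hF.le (WithLp.toLp 1 (z, (0 : ℝ)))
  refine ⟨f, mem_suppJ_of_norm_le_one hx hf_norm (by simpa [hf] using hFx), ?_⟩
  have hsub : WithLp.toLp 1 (y, (0 : ℝ)) =
      WithLp.toLp 1 (y, ε * ‖y‖) - WithLp.toLp 1 (0, ε * ‖y‖) := by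
    simp [← WithLp.toLp_sub]
  calc |f y| = |F (WithLp.toLp 1 (0, ε * ‖y‖))| := by
        rw [hf, hsub, map_sub, hFy, zero_sub, abs_neg]
    _ ≤ ‖WithLp.toLp 1 ((0 : E), ε * ‖y‖)‖ := abs_apply_le_norm_of_norm_le_one hF.le _
    _ = ε * ‖y‖ := by simp [abs_of_nonneg hε]

theorem bOrth_of_mem_suppJ {f : E →L[ℝ] ℝ} (hf : f ∈ SuppJ x) (hfy : |f y| ≤ ε * ‖y‖) :
    BOrth ε x y := fun t => by
  have hle : ‖x‖ ≤ ‖x + t • y‖ + ε * ‖t • y‖ := calc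
    ‖x‖ = f (x + t • y) + -(t * f y) := by simp [hf.2]
    _ ≤ |f (x + t • y)| + |t * f y| := add_le_add (le_abs_self _) (neg_le_abs _)
    _ ≤ ‖x + t • y‖ + |t| * (ε * ‖y‖) := by
      rw [abs_mul]
      gcongr
      exact abs_apply_le_norm_of_norm_le_one hf.1.le _
    _ = ‖x + t • y‖ + ε * ‖t • y‖ := by rw [norm_smul, Real.norm_eq_abs, mul_left_comm]
  have hmul := mul_le_mul_of_nonneg_left hle (norm_nonneg x)
  linarith [two_mul_le_add_sq ‖x‖ ‖x + t • y‖]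

theorem exists_bOrth_iff_exists_mem_suppJ_abs_lt (hx : x ≠ 0) (hy : y ≠ 0) :
    (∃ ε ∈ Ico (0 : ℝ) 1, BOrth ε x y) ↔ ∃ f ∈ SuppJ x, |f y| < ‖y‖ := by
  have hy_pos : 0 < ‖y‖ := norm_pos_iff.2 hy
  constructor
  · rintro ⟨ε, ⟨hε0, hε1⟩, h⟩
    obtain ⟨f, hf, hfy⟩ := h.exists_mem_suppJ_abs_le hε0 hx
    exact ⟨f, hf, hfy.trans_lt (mul_lt_of_lt_one_left hy_pos hε1)⟩
  · rintro ⟨f, hf, hfy⟩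
    exact ⟨|f y| / ‖y‖, ⟨by positivity, (div_lt_one hy_pos).2 hfy⟩,
      bOrth_of_mem_suppJ hf (div_mul_cancel₀ _ hy_pos.ne').ge⟩

end ApproximateOrthogonality

theorem stmt_9 {X : Type*} [NormedAddCommGroup X] [NormedSpace ℝ X]
    (x : X) (hx : ‖x‖ = 1) :
    LocalP x ↔
      ∀ y : X, ‖y‖ = 1 → BJOrth x y → ∃ ε ∈ Set.Ico (0 : ℝ) 1, BOrth ε y x := by
  rw [localP_iff_exists_mem_suppJ_abs_lt]
  refine forall₃_congr fun y hy _ => (exists_bOrth_iff_exists_mem_suppJ_abs_lt ?_ ?_).symm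
  · exact ne_zero_of_norm_ne_zero (hy.trans_ne one_ne_zero)
  · exact ne_zero_of_norm_ne_zero (hx.trans_ne one_ne_zero)
end

section
/- Let X be a finite-dimensional polyhedral real Banach space such that R(X) ≤ 1, where R(X) = sup{‖x − y‖ : the segment [x,y] is contained in S_X}. Then the Birkhoff-James orthogonality is C-approximately symmetric in X: there exists ε ∈ [0,1) such that for all x, y ∈ X, x ⊥_B y implies y ⊥_B^ε x. -/
/-!
If the norm is the maximum of finitely many functionals, then a functional that is inactive at `y`
(it does not attain the norm of `y`) stays inactive near `y`. Hence, if `‖x‖ = ‖y‖` and every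
functional active at `y` is active at `x`, the segment from `x` to `y` extends beyond `y` within the
sphere. In particular an extreme point of the ball is determined by its active functionals, so the
ball has finitely many extreme points. Applied to the dual space, whose norm is the maximum over the
vertices of the unit ball of `X`, this shows that the dual ball of a polyhedral space `X` has
finitely many extreme points, and the norm of `X` is the maximum of these.

Now let `x ⊥_B y` be unit vectors. Some active functional `g` of `x` has `g y ≤ 0`, whence
`‖x - y‖ ≥ 1`; since the sphere contains no segment longer than `1`, some active functional `f` of
`y` has `f x < 1`. With `g` and the set of active functionals of `y` fixed, `x` ranges over a
compact set, and there are finitely many choices for both, so `f x ≤ ε` for a uniform `ε < 1`. The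
same for `-x` gives an active functional of `y` with value at least `-ε` at `x`, and the two
functionals bound `‖y + t • x‖` from below for `t ≤ 0` and `t ≥ 0` respectively.
-/

open Set Metric

section PolyhedralSpace

open Filter Topology AffineMap NormedSpace

section Compact

lemma eventually_nhds_forall_exists_lt_of_isCompact {α β ι : Type*} [TopologicalSpace α]
    [TopologicalSpace β] [LinearOrder β] [OrderClosedTopology β] {K : Set α} {f : ι → α → β}
    {s : Set ι} {c : β} (hK : IsCompact K) (hf : ∀ i ∈ s, Continuous (f i))
    (h : ∀ x ∈ K, ∃ i ∈ s, f i x < c) : ∀ᶠ ε in 𝓝 c, ∀ x ∈ K, ∃ i ∈ s, f i x < ε := by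
  refine hK.eventually_forall_of_forall_eventually fun x hx => ?_
  obtain ⟨i, hi, hix⟩ := h x hx
  have hopen : IsOpen {p : β × α | f i p.2 < p.1} :=
    isOpen_lt ((hf i hi).comp continuous_snd) continuous_fst
  filter_upwards [hopen.mem_nhds hix] with p hp using ⟨i, hi, hp⟩

lemma exists_extremePoint_forall_apply_le_of_isCompact {E : Type*} [AddCommGroup E] [Module ℝ E]
    [TopologicalSpace E] [T2Space E] [IsTopologicalAddGroup E] [ContinuousSMul ℝ E]
    [LocallyConvexSpace ℝ E] {s : Set E} (hs : IsCompact s) (hne : s.Nonempty)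
    (l : StrongDual ℝ E) : ∃ e ∈ s.extremePoints ℝ, ∀ x ∈ s, l x ≤ l e := by
  have hface : IsExposed ℝ s (l.toExposed s) := ContinuousLinearMap.toExposed.isExposed
  obtain ⟨x, hx, hmax⟩ := hs.exists_isMaxOn hne l.continuous.continuousOn
  obtain ⟨e, he⟩ := (hface.isCompact hs).extremePoints_nonempty ⟨x, hx, hmax⟩
  exact ⟨e, hface.isExtreme.extremePoints_subset_extremePoints he, he.1.2⟩

end Compact

variable {X : Type*} [NormedAddCommGroup X] [NormedSpace ℝ X]

lemma exists_extremePoint_closedBall_apply_eq_norm [ProperSpace X] (l : StrongDual ℝ X) :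
    ∃ e ∈ (closedBall (0 : X) 1).extremePoints ℝ, l e = ‖l‖ := by
  obtain ⟨e, he, hmax⟩ := exists_extremePoint_forall_apply_le_of_isCompact
    (isCompact_closedBall (0 : X) 1) ⟨0, by simp⟩ l
  refine ⟨e, he, le_antisymm ?_ (l.opNorm_le_of_unit_norm ?_ fun x hx => abs_le.2 ⟨?_, ?_⟩)⟩
  · exact (le_abs_self _).trans (l.unit_le_opNorm e (mem_closedBall_zero_iff.1 he.1))
  · simpa using hmax 0 (by simp)
  · simpa [neg_le] using hmax (-x) (by simp [hx])
  · exact hmax x (by simp [hx])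

lemma segment_subset_sphere_of_apply_eq_norm {f : StrongDual ℝ X} (hf : ∀ w, f w ≤ ‖w‖)
    {x z : X} {r : ℝ} (hx : x ∈ sphere 0 r) (hz : z ∈ sphere 0 r) (hfx : f x = ‖x‖)
    (hfz : f z = ‖z‖) : segment ℝ x z ⊆ sphere 0 r := by
  intro w hw
  have hball : w ∈ closedBall 0 r := (convex_closedBall (0 : X) r).segment_subset
    (sphere_subset_closedBall hx) (sphere_subset_closedBall hz) hw
  have hface : r ≤ f w := (convex_halfSpace_ge f.isLinear r).segment_subset
    (hfx.trans (mem_sphere_zero_iff_norm.1 hx)).ge (hfz.trans (mem_sphere_zero_iff_norm.1 hz)).ge hw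
  rw [mem_sphere_zero_iff_norm]
  exact le_antisymm (mem_closedBall_zero_iff.1 hball) (hface.trans (hf w))

section JamesBoundary

/-- A James boundary of `X`: a set of functionals of norm at most one, among which every vector has
one attaining its norm. The bound is stated without absolute values, so the norm is the pointwise
maximum of the set. -/
structure IsJamesBoundary (D : Set (StrongDual ℝ X)) : Prop where
  apply_le_norm : ∀ f ∈ D, ∀ x, f x ≤ ‖x‖
  exists_apply_eq_norm : ∀ x, ∃ f ∈ D, f x = ‖x‖

/-- The functionals in `D` that are active at `x`, that is, attain the norm of `x`. When `D` is the
unit sphere of the dual this is `SuppJ x`. -/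
def activeSet (D : Set (StrongDual ℝ X)) (x : X) : Set (StrongDual ℝ X) := {f ∈ D | f x = ‖x‖}

variable {D : Set (StrongDual ℝ X)} {x y : X}

lemma activeSet_subset : activeSet D x ⊆ D := sep_subset _ _

lemma activeSet_smul {r : ℝ} (hr : 0 < r) : activeSet D (r • x) = activeSet D x := by
  ext f
  simp [activeSet, norm_smul, abs_of_pos hr, hr.ne']

lemma eventually_activeSet_subset (hfin : D.Finite) (y : X) :
    ∀ᶠ z in 𝓝 y, activeSet D z ⊆ activeSet D y := by
  have hinactive : ∀ f ∈ D, ∀ᶠ z in 𝓝 y, f z = ‖z‖ → f y = ‖y‖ := fun f _ => by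
    by_cases hf : f y = ‖y‖
    · exact .of_forall fun _ _ => hf
    · filter_upwards [(isOpen_ne_fun f.continuous continuous_norm).mem_nhds hf] with z hz hfz
      exact absurd hfz hz
  filter_upwards [(eventually_all_finite hfin).2 hinactive] with z hz f hf
  exact ⟨hf.1, hz f hf.1 hf.2⟩

namespace IsJamesBoundary

lemma exists_mem_activeSet (hD : IsJamesBoundary D) (x : X) : ∃ f, f ∈ activeSet D x :=
  hD.exists_apply_eq_norm x

lemma extremePoints_dual_closedBall [FiniteDimensional ℝ X] :
    IsJamesBoundary ((closedBall (0 : StrongDual ℝ X) 1).extremePoints ℝ) where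
  apply_le_norm f hf x := by
    have hnorm : ‖f‖ ≤ 1 := mem_closedBall_zero_iff.1 hf.1
    simpa using (le_abs_self _).trans (f.le_of_opNorm_le hnorm x)
  exists_apply_eq_norm x := by
    obtain ⟨f, hf, hfx⟩ :=
      exists_extremePoint_closedBall_apply_eq_norm (inclusionInDoubleDual ℝ X x)
    exact ⟨f, hf, hfx.trans ((inclusionInDoubleDualLi ℝ).norm_map x)⟩

lemma inclusionInDoubleDual_image_extremePoints [ProperSpace X] :
    IsJamesBoundary (inclusionInDoubleDual ℝ X '' (closedBall (0 : X) 1).extremePoints ℝ) where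
  apply_le_norm := forall_mem_image.2 fun e he l =>
    (le_abs_self _).trans (l.unit_le_opNorm e (mem_closedBall_zero_iff.1 he.1))
  exists_apply_eq_norm l := exists_mem_image.2 (exists_extremePoint_closedBall_apply_eq_norm l)

lemma exists_segment_lineMap_subset_sphere (hD : IsJamesBoundary D) (hfin : D.Finite) {ρ : ℝ}
    (hx : x ∈ sphere 0 ρ) (hy : y ∈ sphere 0 ρ) (hsub : activeSet D y ⊆ activeSet D x) :
    ∃ r > (1 : ℝ), segment ℝ x (lineMap x y r) ⊆ sphere 0 ρ := by
  have htendsto : Tendsto (lineMap x y : ℝ → X) (𝓝[>] 1) (𝓝 y) :=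
    (lineMap_continuous.tendsto' 1 y (lineMap_apply_one x y)).mono_left nhdsWithin_le_nhds
  obtain ⟨r, hact, hr⟩ :=
    ((htendsto.eventually (eventually_activeSet_subset hfin y)).and self_mem_nhdsWithin).exists
  obtain ⟨f, hfz⟩ := hD.exists_mem_activeSet (lineMap x y r)
  have hfy : f y = ‖y‖ := (hact hfz).2
  have hfx : f x = ‖x‖ := (hsub (hact hfz)).2
  have hz : lineMap x y r ∈ sphere 0 ρ := by
    rw [mem_sphere_zero_iff_norm] at hx hy ⊢
    rw [← hfz.2, lineMap_apply_module, map_add, map_smul, map_smul, hfx, hfy, hx, hy]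
    simp only [smul_eq_mul]
    ring
  exact ⟨r, hr, segment_subset_sphere_of_apply_eq_norm (hD.apply_le_norm f hfz.1) hx hz hfx hfz.2⟩

lemma eq_of_activeSet_subset (hD : IsJamesBoundary D) (hfin : D.Finite) {ρ : ℝ}
    (hx : x ∈ sphere 0 ρ) (hy : y ∈ sphere 0 ρ)
    (hext : y ∈ (closedBall (0 : X) ρ).extremePoints ℝ)
    (hsub : activeSet D y ⊆ activeSet D x) : x = y := by
  obtain ⟨r, hr, hseg⟩ := hD.exists_segment_lineMap_subset_sphere hfin hx hy hsub
  have hr₀ : 0 < r := one_pos.trans hr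
  have hmem : y ∈ openSegment ℝ x (lineMap x y r) := by
    have := lineMap_mem_openSegment ℝ x (lineMap x y r) ⟨inv_pos.2 hr₀, inv_lt_one_of_one_lt₀ hr⟩
    rwa [lineMap_lineMap_right, inv_mul_cancel₀ hr₀.ne', lineMap_apply_one] at this
  exact hext.2 (sphere_subset_closedBall hx)
    (sphere_subset_closedBall (hseg (right_mem_segment ℝ _ _))) hmem

lemma finite_extremePoints_closedBall (hD : IsJamesBoundary D) (hfin : D.Finite) (ρ : ℝ) :
    ((closedBall (0 : X) ρ).extremePoints ℝ).Finite := by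
  cases subsingleton_or_nontrivial X
  · exact toFinite _
  refine .of_injOn (f := activeSet D) (fun _ _ => activeSet_subset) (fun x hx y hy hxy => ?_)
    hfin.finite_subsets
  exact hD.eq_of_activeSet_subset hfin (extremePoints_closedBall_subset_sphere hx)
    (extremePoints_closedBall_subset_sphere hy) hy hxy.symm.subset

end IsJamesBoundary

lemma exists_finite_isJamesBoundary [FiniteDimensional ℝ X]
    (hpoly : ((closedBall (0 : X) 1).extremePoints ℝ).Finite) :
    ∃ D : Set (StrongDual ℝ X), D.Finite ∧ IsJamesBoundary D :=
  ⟨_, IsJamesBoundary.inclusionInDoubleDual_image_extremePoints.finite_extremePoints_closedBall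
    (hpoly.image _) 1, .extremePoints_dual_closedBall⟩

end JamesBoundary

section Orthogonality

variable {D : Set (StrongDual ℝ X)} {x y : X} {ε : ℝ}

lemma BJOrth.neg_left (h : BJOrth x y) : BJOrth (-x) y := fun t => by
  have hflip : -x + t • y = -(x + (-t) • y) := by module
  simpa only [hflip, norm_neg] using h (-t)

lemma BJOrth.exists_mem_activeSet_apply_nonpos (hxy : BJOrth x y) (hD : IsJamesBoundary D)
    (hfin : D.Finite) : ∃ f ∈ activeSet D x, f y ≤ 0 := by
  have htendsto : Tendsto (fun t : ℝ => x + t • y) (𝓝[<] 0) (𝓝 x) :=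
    (Continuous.tendsto' (by fun_prop) 0 x (by simp)).mono_left nhdsWithin_le_nhds
  obtain ⟨t, hact, ht : t < 0⟩ :=
    ((htendsto.eventually (eventually_activeSet_subset hfin x)).and self_mem_nhdsWithin).exists
  obtain ⟨f, hf⟩ := hD.exists_mem_activeSet (x + t • y)
  have hle : ‖x‖ ≤ ‖x‖ + t * f y := by
    simpa [← hf.2, (hact hf).2] using hxy t
  exact ⟨f, hact hf, nonpos_of_mul_nonneg_right (by linarith) ht⟩

lemma BOrth.of_norm_sub_le (h : ∀ t : ℝ, ‖x‖ - ε * ‖t • y‖ ≤ ‖x + t • y‖) : BOrth ε x y :=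
  fun t => calc
    ‖x‖ ^ 2 - 2 * ε * ‖x‖ * ‖t • y‖ = 2 * ‖x‖ * (‖x‖ - ε * ‖t • y‖) - ‖x‖ ^ 2 := by ring
    _ ≤ 2 * ‖x‖ * ‖x + t • y‖ - ‖x‖ ^ 2 := by gcongr; exact h t
    _ ≤ ‖x + t • y‖ ^ 2 := by linarith [two_mul_le_add_sq ‖x‖ ‖x + t • y‖]

lemma BOrth.of_apply_le_of_le_apply {f g : StrongDual ℝ X} (hf : ∀ w, f w ≤ ‖w‖)
    (hg : ∀ w, g w ≤ ‖w‖) (hfx : f x = ‖x‖) (hgx : g x = ‖x‖) (hfy : f y ≤ ε * ‖y‖)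
    (hgy : -(ε * ‖y‖) ≤ g y) : BOrth ε x y := by
  refine .of_norm_sub_le fun t => ?_
  rw [norm_smul, Real.norm_eq_abs]
  rcases le_total t 0 with ht | ht
  · calc ‖x‖ - ε * (|t| * ‖y‖) = ‖x‖ + t * (ε * ‖y‖) := by rw [abs_of_nonpos ht]; ring
      _ ≤ ‖x‖ + t * f y := by grw [mul_le_mul_of_nonpos_left hfy ht]
      _ = f (x + t • y) := by simp [hfx]
      _ ≤ ‖x + t • y‖ := hf _
  · calc ‖x‖ - ε * (|t| * ‖y‖) = ‖x‖ + t * -(ε * ‖y‖) := by rw [abs_of_nonneg ht]; ring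
      _ ≤ ‖x‖ + t * g y := by gcongr
      _ = g (x + t • y) := by simp [hgx]
      _ ≤ ‖x + t • y‖ := hg _

namespace IsJamesBoundary

lemma exists_one_lt_norm_sub_of_activeSet_subset (hD : IsJamesBoundary D) (hfin : D.Finite)
    (hx : x ∈ sphere 0 1) (hy : y ∈ sphere 0 1) {g : StrongDual ℝ X} (hg : g ∈ activeSet D x)
    (hgy : g y ≤ 0) (hsub : activeSet D y ⊆ activeSet D x) :
    ∃ z, segment ℝ x z ⊆ sphere 0 1 ∧ 1 < ‖x - z‖ := by
  obtain ⟨r, hr, hseg⟩ := hD.exists_segment_lineMap_subset_sphere hfin hx hy hsub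
  have hdist : 1 ≤ dist x y := calc
    1 = g x := by rw [hg.2, mem_sphere_zero_iff_norm.1 hx]
    _ ≤ g (x - y) := by rw [map_sub]; linarith
    _ ≤ dist x y := by rw [dist_eq_norm]; exact hD.apply_le_norm g hg.1 _
  refine ⟨_, hseg, ?_⟩
  rw [← dist_eq_norm, dist_left_lineMap, Real.norm_of_nonneg (one_pos.trans hr).le]
  exact one_lt_mul_of_lt_of_le hr hdist

lemma exists_mem_activeSet_apply_lt_one (hD : IsJamesBoundary D) (hfin : D.Finite)
    (hR : ∀ x y : X, segment ℝ x y ⊆ sphere (0 : X) 1 → ‖x - y‖ ≤ 1)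
    (hx : x ∈ sphere 0 1) (hy : y ∈ sphere 0 1) {g : StrongDual ℝ X} (hg : g ∈ activeSet D x)
    (hgy : g y ≤ 0) : ∃ f ∈ activeSet D y, f x < 1 := by
  by_contra! hone
  have hsub : activeSet D y ⊆ activeSet D x := fun f hf =>
    ⟨hf.1, (hD.apply_le_norm f hf.1 x).antisymm (mem_sphere_zero_iff_norm.1 hx ▸ hone f hf)⟩
  obtain ⟨z, hseg, hlong⟩ :=
    hD.exists_one_lt_norm_sub_of_activeSet_subset hfin hx hy hg hgy hsub
  exact hlong.not_ge (hR x z hseg)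

variable [ProperSpace X]

lemma eventually_exists_mem_activeSet_apply_lt (hD : IsJamesBoundary D) (hfin : D.Finite)
    (hR : ∀ x y : X, segment ℝ x y ⊆ sphere (0 : X) 1 → ‖x - y‖ ≤ 1) :
    ∀ᶠ ε in 𝓝 (1 : ℝ), ∀ x ∈ sphere (0 : X) 1, ∀ y ∈ sphere (0 : X) 1, ∀ g ∈ activeSet D x,
      g y ≤ 0 → ∃ f ∈ activeSet D y, f x < ε := by
  have hpairs : ∀ᶠ ε in 𝓝 (1 : ℝ), ∀ g ∈ D,
      ∀ B ∈ activeSet D '' {y ∈ sphere (0 : X) 1 | g y ≤ 0},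
      ∀ x ∈ sphere (0 : X) 1 ∩ {x | g x = ‖x‖}, ∃ f ∈ B, f x < ε := by
    refine (eventually_all_finite hfin).2 fun g hg => (eventually_all_finite ?_).2 ?_
    · exact hfin.finite_subsets.subset (image_subset_iff.2 fun _ _ => activeSet_subset)
    · refine forall_mem_image.2 fun y ⟨hy, hgy⟩ => ?_
      have hK : IsCompact (sphere (0 : X) 1 ∩ {x | g x = ‖x‖}) :=
        (isCompact_sphere 0 1).inter_right (isClosed_eq g.continuous continuous_norm)
      exact eventually_nhds_forall_exists_lt_of_isCompact hK (fun f _ => f.continuous)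
        fun x ⟨hx, hgx⟩ => hD.exists_mem_activeSet_apply_lt_one hfin hR hx hy ⟨hg, hgx⟩ hgy
  filter_upwards [hpairs] with ε hε x hx y hy g hg hgy
  exact hε g hg.1 _ (mem_image_of_mem _ ⟨hy, hgy⟩) x ⟨hx, hg.2⟩

lemma eventually_exists_mem_activeSet_apply_le_of_bjOrth (hD : IsJamesBoundary D)
    (hfin : D.Finite) (hR : ∀ x y : X, segment ℝ x y ⊆ sphere (0 : X) 1 → ‖x - y‖ ≤ 1) :
    ∀ᶠ ε in 𝓝 (1 : ℝ), ∀ x y : X, x ≠ 0 → y ≠ 0 → BJOrth x y →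
      ∃ f ∈ activeSet D y, f x ≤ ε * ‖x‖ := by
  filter_upwards [hD.eventually_exists_mem_activeSet_apply_lt hfin hR] with ε hε x y hx hy hxy
  have hx_inv : 0 < ‖x‖⁻¹ := inv_pos.2 (norm_pos_iff.2 hx)
  have hy_inv : 0 < ‖y‖⁻¹ := inv_pos.2 (norm_pos_iff.2 hy)
  obtain ⟨g, hg, hgy⟩ := hxy.exists_mem_activeSet_apply_nonpos hD hfin
  obtain ⟨f, hf, hfx⟩ := hε (‖x‖⁻¹ • x) (by simp [norm_smul, hx]) (‖y‖⁻¹ • y)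
    (by simp [norm_smul, hy]) g (by rwa [activeSet_smul hx_inv])
    (by rw [map_smul]; exact smul_nonpos_of_nonneg_of_nonpos hy_inv.le hgy)
  rw [activeSet_smul hy_inv] at hf
  rw [map_smul, smul_eq_mul, inv_mul_lt_iff₀ (norm_pos_iff.2 hx), mul_comm] at hfx
  exact ⟨f, hf, hfx.le⟩

end IsJamesBoundary

end Orthogonality

end PolyhedralSpace

theorem stmt_17 {X : Type*} [NormedAddCommGroup X] [NormedSpace ℝ X]
    [FiniteDimensional ℝ X]
    (hpoly : (Set.extremePoints ℝ (Metric.closedBall (0 : X) 1)).Finite)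
    (hR : ∀ x y : X, segment ℝ x y ⊆ Metric.sphere (0 : X) 1 → ‖x - y‖ ≤ 1) :
    ∃ ε ∈ Set.Ico (0 : ℝ) 1, ∀ x y : X, BJOrth x y → BOrth ε y x := by
  obtain ⟨D, hfin, hD⟩ := exists_finite_isJamesBoundary hpoly
  have hbound := hD.eventually_exists_mem_activeSet_apply_le_of_bjOrth hfin hR
  obtain ⟨ε, hε, hε_mem⟩ :=
    ((hbound.filter_mono nhdsWithin_le_nhds).and (Ico_mem_nhdsLT one_pos)).exists
  refine ⟨ε, hε_mem, fun x y hxy => ?_⟩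
  rcases eq_or_ne x 0 with rfl | hx
  · simp [BOrth]
  rcases eq_or_ne y 0 with rfl | hy
  · simp [BOrth]
  obtain ⟨f, hf, hfx⟩ := hε x y hx hy hxy
  obtain ⟨g, hg, hgx⟩ := hε (-x) y (neg_ne_zero.2 hx) hy hxy.neg_left
  rw [map_neg, norm_neg] at hgx
  exact .of_apply_le_of_le_apply (hD.apply_le_norm f hf.1) (hD.apply_le_norm g hg.1) hf.2 hg.2
    hfx (neg_le.1 hgx)
end
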